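/- Let n ≥ 2, let K ⊂ ℝⁿ be a convex body with the origin in its interior, let 0 ≤ λ < 1, and let c ≥ vol_n(K). Then the sublevel set {t ∈ ℝⁿ : G_{K,λ}(t) ≤ c} is a convex body, i.e., a compact convex set with nonempty interior. -/

import Mathlib

open MeasureTheory Set Pointwise Metric

/-- A convex body: a compact convex set with nonempty interior. -/
def IsConvexBody {n : ℕ} (K : Set (EuclideanSpace ℝ (Fin n))) : Prop :=
  IsCompact K ∧ Convex ℝ K ∧ (interior K).Nonempty

/-- The λ-homothetic convex hull function `G_{K,λ}(t) = volₙ(conv(K ∪ (λK + t)))`. -/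
noncomputable def homChf {n : ℕ} (K : Set (EuclideanSpace ℝ (Fin n))) (l : ℝ)
    (t : EuclideanSpace ℝ (Fin n)) : ℝ :=
  (volume (convexHull ℝ (K ∪ (t +ᵥ l • K)))).toReal

/-! Lift `K` to height `0` and `L` to height `1` in `E × ℝ`, and let `C` be the convex hull of the
two copies. Then `conv (K ∪ (t + L))` is the image of `C` under `(x, y) ↦ x + y t`. Moving `t` along
a line in direction `v` slides each point of this shadow parallel to `v`, at a speed depending on
the point only. Hence on every line parallel to `v` the section of the shadow at `a t₀ + b t₁` lies
in the corresponding Minkowski combination of the sections at `t₀` and `t₁`. The sections are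
intervals, whose lengths add up, so by Fubini the volume is a convex function of `t`, and a convex
function on a finite-dimensional space is continuous. Its sublevel sets are bounded because a convex
set that contains a fixed ball and a far away point contains many disjoint translates of a smaller
ball. If `t ∈ (1 - l) K`, then `t + l K ⊆ K`, so the sublevel set contains `(1 - l) K`. -/

open Bornology
open scoped ENNReal NNReal

section Interval

lemma volume_eq_ediam_of_convex {s : Set ℝ} (hs : Convex ℝ s) : volume s = ediam s := by
  refine (Real.volume_le_diam s).antisymm (ediam_le fun x hx y hy ↦ ?_)
  calc edist x y = volume (uIcc x y) := by
        rw [Real.volume_interval, edist_comm, edist_dist, Real.dist_eq]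
    _ ≤ volume s := measure_mono (hs.ordConnected.uIcc_subset hx hy)

lemma volume_smul_add_smul_le_of_convex {s t : Set ℝ} (hs : Convex ℝ s) (ht : Convex ℝ t)
    (a b : ℝ≥0) : volume (a • s + b • t) ≤ a • volume s + b • volume t :=
  calc volume ((a : ℝ) • s + (b : ℝ) • t)
      ≤ ediam ((a : ℝ) • s + (b : ℝ) • t) := Real.volume_le_diam _
    _ ≤ ediam ((a : ℝ) • s) + ediam ((b : ℝ) • t) := ediam_add_le _ _
    _ = a • volume s + b • volume t := by
      rw [ediam_smul₀, ediam_smul₀, NNReal.nnnorm_eq, NNReal.nnnorm_eq,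
        volume_eq_ediam_of_convex hs, volume_eq_ediam_of_convex ht]

end Interval

section Fubini

variable {α β : Type*} [MeasurableSpace α] [MeasurableSpace β] {μ : Measure α} {ν : Measure β}
  [SFinite ν] {s : Set (α × β)}

lemma ae_measure_preimage_prodMk_eq_toMeasurable (hs : NullMeasurableSet s (μ.prod ν)) :
    (fun x ↦ ν (Prod.mk x ⁻¹' s)) =ᵐ[μ]
      fun x ↦ ν (Prod.mk x ⁻¹' toMeasurable (μ.prod ν) s) := by
  filter_upwards [Measure.ae_ae_of_ae_prod hs.toMeasurable_ae_eq.mem_iff] with x hx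
  exact measure_congr (Filter.eventuallyEq_set.2 hx).symm

lemma aemeasurable_measure_preimage_prodMk (hs : NullMeasurableSet s (μ.prod ν)) :
    AEMeasurable (fun x ↦ ν (Prod.mk x ⁻¹' s)) μ :=
  ⟨_, measurable_measure_prodMk_left (measurableSet_toMeasurable _ _),
    ae_measure_preimage_prodMk_eq_toMeasurable hs⟩

lemma measure_prod_eq_lintegral_of_nullMeasurableSet (hs : NullMeasurableSet s (μ.prod ν)) :
    μ.prod ν s = ∫⁻ x, ν (Prod.mk x ⁻¹' s) ∂μ := by
  rw [lintegral_congr_ae (ae_measure_preimage_prodMk_eq_toMeasurable hs),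
    ← Measure.prod_apply (measurableSet_toMeasurable _ _), measure_toMeasurable]

end Fubini

section Shadow

variable {E : Type*} [AddCommGroup E] [Module ℝ E]

/-- The member with parameter `u` of the Rogers–Shephard shadow system of `C ⊆ E × ℝ`: the image of
`C` under the projection `(x, y) ↦ x + y • u` along the direction `(u, -1)`. -/
def shadow (C : Set (E × ℝ)) (u : E) : Set E :=
  LinearMap.coprod LinearMap.id (LinearMap.toSpanSingleton ℝ E u) '' C

lemma mem_shadow {C : Set (E × ℝ)} {u z : E} : z ∈ shadow C u ↔ ∃ p ∈ C, p.1 + p.2 • u = z :=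
  Iff.rfl

lemma convex_shadow {C : Set (E × ℝ)} (hC : Convex ℝ C) (u : E) : Convex ℝ (shadow C u) :=
  hC.linear_image _

lemma convexHull_union_vadd_eq_shadow (K L : Set E) (t : E) :
    convexHull ℝ (K ∪ (t +ᵥ L)) = shadow (convexHull ℝ (K ×ˢ {0} ∪ L ×ˢ {1})) t := by
  rw [shadow, LinearMap.image_convexHull, image_union, prod_singleton, prod_singleton, image_image,
    image_image]
  simp [← image_vadd, add_comm t]

lemma preimage_line_shadow_subset (C : Set (E × ℝ)) (u w x : E) {a b : ℝ} (hab : a + b = 1) :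
    (fun r : ℝ ↦ x + r • (w - u)) ⁻¹' shadow C (a • u + b • w) ⊆
      a • ((fun r : ℝ ↦ x + r • (w - u)) ⁻¹' shadow C u) +
        b • ((fun r : ℝ ↦ x + r • (w - u)) ⁻¹' shadow C w) := by
  obtain rfl : a = 1 - b := eq_sub_of_add_eq hab
  rintro r ⟨p, hp, hpr⟩
  -- As the parameter moves from `u` to `w`, the image of `p` slides by `p.2 • (w - u)`.
  have hx : x = p.1 + p.2 • ((1 - b) • u + b • w) - r • (w - u) := eq_sub_of_add_eq hpr.symm
  have hu : r - b * p.2 ∈ (fun r : ℝ ↦ x + r • (w - u)) ⁻¹' shadow C u :=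
    mem_shadow.2 ⟨p, hp, by rw [hx]; module⟩
  have hw : r + (1 - b) * p.2 ∈ (fun r : ℝ ↦ x + r • (w - u)) ⁻¹' shadow C w :=
    mem_shadow.2 ⟨p, hp, by rw [hx]; module⟩
  refine mem_add.2 ⟨_, smul_mem_smul_set hu, _, smul_mem_smul_set hw, ?_⟩
  simp only [smul_eq_mul]
  ring

lemma convex_preimage_line {s : Set E} (hs : Convex ℝ s) (x v : E) :
    Convex ℝ ((fun r : ℝ ↦ x + r • v) ⁻¹' s) :=
  (hs.translate_preimage_right x).linear_preimage (LinearMap.toSpanSingleton ℝ E v)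

end Shadow

section ShadowVolume

variable {E : Type*} [NormedAddCommGroup E] [NormedSpace ℝ E] [FiniteDimensional ℝ E]
  [MeasurableSpace E] [BorelSpace E] (μ : Measure E) [μ.IsAddHaarMeasure]

theorem exists_measure_map_add_smul_eq {v : E} (hv : v ≠ 0) :
    ∃ ν : Measure E, SFinite ν ∧ (ν.prod volume).map (fun p : E × ℝ ↦ p.1 + p.2 • v) = μ := by
  obtain ⟨W, hW⟩ := Submodule.exists_isCompl (ℝ ∙ v)
  let e : (W × ℝ) ≃L[ℝ] E := ((LinearEquiv.refl ℝ W).prodCongr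
    (LinearEquiv.toSpanNonzeroSingleton ℝ E v hv) ≪≫ₗ
      W.prodEquivOfIsCompl (ℝ ∙ v) hW.symm).toContinuousLinearEquiv
  let m : Measure W := Measure.addHaar
  have he : (e : W × ℝ → E) = (fun p : E × ℝ ↦ p.1 + p.2 • v) ∘ Prod.map Subtype.val id := by
    ext p
    simp [e]
  have hmap : (m.prod volume).map e =
      ((m.map Subtype.val).prod volume).map fun p : E × ℝ ↦ p.1 + p.2 • v := by
    rw [he, ← Measure.map_map (by fun_prop) (by fun_prop),
      ← Measure.map_prod_map m volume (by fun_prop) measurable_id, Measure.map_id]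
  have : ((m.prod volume).map e).IsAddHaarMeasure := e.isAddHaarMeasure_map _
  refine ⟨μ.addHaarScalarFactor ((m.prod volume).map e) • m.map Subtype.val, inferInstance, ?_⟩
  rw [Measure.prod_smul_left, Measure.map_smul, ← hmap]
  exact (Measure.isAddLeftInvariant_eq_smul μ _).symm

variable {μ} in
theorem measure_le_of_forall_line {v : E} (hv : v ≠ 0) {s s₀ s₁ : Set E}
    (hs : NullMeasurableSet s μ) (hs₀ : NullMeasurableSet s₀ μ) (hs₁ : NullMeasurableSet s₁ μ)
    {a b : ℝ≥0}
    (h : ∀ x, volume ((fun r : ℝ ↦ x + r • v) ⁻¹' s) ≤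
      a • volume ((fun r : ℝ ↦ x + r • v) ⁻¹' s₀) + b • volume ((fun r : ℝ ↦ x + r • v) ⁻¹' s₁)) :
    μ s ≤ a • μ s₀ + b • μ s₁ := by
  obtain ⟨ν, _, hν⟩ := exists_measure_map_add_smul_eq μ hv
  have hf : MeasurePreserving (fun p : E × ℝ ↦ p.1 + p.2 • v) (ν.prod volume) μ :=
    ⟨by fun_prop, hν⟩
  have slice_aemeasurable {A : Set E} (hA : NullMeasurableSet A μ) :
      AEMeasurable (fun x ↦ volume ((fun r : ℝ ↦ x + r • v) ⁻¹' A)) ν :=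
    aemeasurable_measure_preimage_prodMk (hA.preimage hf.quasiMeasurePreserving)
  have measure_eq {A : Set E} (hA : NullMeasurableSet A μ) :
      μ A = ∫⁻ x, volume ((fun r : ℝ ↦ x + r • v) ⁻¹' A) ∂ν := by
    rw [← hf.measure_preimage hA, measure_prod_eq_lintegral_of_nullMeasurableSet
      (hA.preimage hf.quasiMeasurePreserving)]
    rfl
  simp only [ENNReal.smul_def, smul_eq_mul] at h ⊢
  rw [measure_eq hs, measure_eq hs₀, measure_eq hs₁,
    ← lintegral_const_mul'' _ (slice_aemeasurable hs₀),
    ← lintegral_const_mul'' _ (slice_aemeasurable hs₁),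
    ← lintegral_add_left' ((slice_aemeasurable hs₀).const_mul _)]
  exact lintegral_mono h

theorem convexOn_measure_shadow {C : Set (E × ℝ)} (hC : Convex ℝ C) :
    ConvexOn ℝ≥0 univ fun u ↦ μ (shadow C u) := by
  refine ⟨convex_univ, fun u _ w _ a b _ _ hab ↦ ?_⟩
  obtain rfl | huw := eq_or_ne u w
  · rw [← add_smul, ← add_smul, hab, one_smul, one_smul]
  have shadow_nullMeasurable (z : E) : NullMeasurableSet (shadow C z) μ :=
    (convex_shadow hC z).nullMeasurableSet μ
  refine measure_le_of_forall_line (sub_ne_zero.2 huw.symm) (shadow_nullMeasurable _)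
    (shadow_nullMeasurable _) (shadow_nullMeasurable _) fun x ↦ ?_
  have hab' : (a : ℝ) + b = 1 := mod_cast hab
  exact (measure_mono (preimage_line_shadow_subset C u w x hab')).trans <|
    volume_smul_add_smul_le_of_convex (convex_preimage_line (convex_shadow hC u) x _)
      (convex_preimage_line (convex_shadow hC w) x _) a b

end ShadowVolume

section Packing

lemma ball_lineMap_subset {E : Type*} [SeminormedAddCommGroup E] [NormedSpace ℝ E] {s : Set E}
    (hs : Convex ℝ s) {x t : E} {r : ℝ} (hx : ball x r ⊆ s) (ht : t ∈ s) {a : ℝ} (ha0 : 0 ≤ a)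
    (ha1 : a < 1) : ball (AffineMap.lineMap x t a) ((1 - a) * r) ⊆ s := by
  have ha : 0 < 1 - a := sub_pos.2 ha1
  have hball : ball (AffineMap.lineMap x t a) ((1 - a) * r) = a • t +ᵥ (1 - a) • ball x r := by
    rw [_root_.smul_ball ha.ne', vadd_ball, Real.norm_of_nonneg ha.le,
      AffineMap.lineMap_apply_module, vadd_eq_add, add_comm]
  rw [hball]
  calc a • t +ᵥ (1 - a) • ball x r ⊆ a • s + (1 - a) • s := by
        grw [vadd_set_subset_add (smul_mem_smul_set ht), hx]
    _ ⊆ s := hs.set_combo_subset ha0 ha.le (add_sub_cancel a 1)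

lemma card_mul_measure_ball_le_of_pairwise_dist {E : Type*} [NormedAddCommGroup E]
    [MeasurableSpace E] [BorelSpace E] (μ : Measure E) [μ.IsAddHaarMeasure] {ι : Type*}
    {I : Finset ι} {p : ι → E} {ρ : ℝ}
    (hp : (I : Set ι).Pairwise fun i j ↦ ρ + ρ ≤ dist (p i) (p j)) {s : Set E}
    (hs : ∀ i ∈ I, ball (p i) ρ ⊆ s) : I.card * μ (ball 0 ρ) ≤ μ s :=
  calc I.card * μ (ball 0 ρ) = ∑ i ∈ I, μ (ball (p i) ρ) := by
        simp [Measure.addHaar_ball_center]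
    _ = μ (⋃ i ∈ I, ball (p i) ρ) :=
        (measure_biUnion_finset (fun i hi j hj hij ↦ ball_disjoint_ball (hp hi hj hij))
          fun _ _ ↦ measurableSet_ball).symm
    _ ≤ μ s := measure_mono (iUnion₂_subset hs)

variable {E : Type*} [NormedAddCommGroup E] [NormedSpace ℝ E] [MeasurableSpace E] [BorelSpace E]
  (μ : Measure E) [μ.IsAddHaarMeasure]

lemma natCast_mul_measure_ball_le_of_convex {s : Set E} (hs : Convex ℝ s) {x t : E} {r : ℝ}
    (hr : 0 ≤ r) (hx : ball x r ⊆ s) (ht : t ∈ s) {N : ℕ} (hN : 2 * N * r ≤ dist x t) :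
    N * μ (ball 0 (r / 2)) ≤ μ s := by
  let p (i : ℕ) : E := AffineMap.lineMap x t (i / (2 * N) : ℝ)
  have ball_subset (i) (hi : i ∈ Finset.range N) : ball (p i) (r / 2) ⊆ s := by
    have hiN : (i : ℝ) < N := mod_cast Finset.mem_range.1 hi
    have hi_half : (i / (2 * N) : ℝ) ≤ 1 / 2 := by
      rw [div_le_div_iff₀ (by linarith [i.cast_nonneg (α := ℝ)]) two_pos]
      linarith
    refine (ball_subset_ball ?_).trans
      (ball_lineMap_subset hs hx ht (by positivity) (hi_half.trans_lt one_half_lt_one))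
    nlinarith
  have le_dist : (Finset.range N : Set ℕ).Pairwise fun i j ↦ r / 2 + r / 2 ≤ dist (p i) (p j) := by
    intro i hi j _ hij
    have hN₀ : (0 : ℝ) < 2 * N := by
      have := (Nat.zero_le i).trans_lt (Finset.mem_range.1 hi)
      positivity
    calc r / 2 + r / 2 = 1 / (2 * N) * (2 * N * r) := by
          rw [one_div, inv_mul_cancel_left₀ hN₀.ne', add_halves]
      _ ≤ dist (i : ℝ) j / (2 * N) * dist x t := by
        gcongr
        rw [Nat.dist_cast_real]
        exact Nat.pairwise_one_le_dist hij
      _ = dist (p i) (p j) := by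
        rw [dist_lineMap_lineMap, Real.dist_eq, Real.dist_eq, ← sub_div, abs_div, abs_of_pos hN₀]
  simpa using card_mul_measure_ball_le_of_pairwise_dist μ le_dist ball_subset

theorem exists_subset_closedBall_of_measure_le (x : E) {r : ℝ} (hr : 0 < r) {c : ℝ≥0∞}
    (hc : c ≠ ∞) :
    ∃ R, ∀ s : Set E, Convex ℝ s → ball x r ⊆ s → μ s ≤ c → s ⊆ closedBall x R := by
  have hball : μ (ball 0 (r / 2)) ≠ 0 := (measure_ball_pos μ 0 (half_pos hr)).ne'
  obtain ⟨N, hN⟩ := ENNReal.exists_nat_mul_gt hball hc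
  refine ⟨2 * N * r, fun s hs hxs hsc t ht ↦ ?_⟩
  by_contra! hlt
  rw [mem_closedBall', not_le] at hlt
  exact (hN.trans_le (natCast_mul_measure_ball_le_of_convex μ hs hr.le hxs ht hlt.le)).not_ge hsc

end Packing

section HullVolume

lemma convexOn_toReal {E : Type*} [AddCommMonoid E] [Module ℝ E] {s : Set E} {f : E → ℝ≥0∞}
    (hf : ConvexOn ℝ≥0 s f) (hf_top : ∀ x ∈ s, f x ≠ ∞) : ConvexOn ℝ s fun x ↦ (f x).toReal := by
  have hs : Convex ℝ s := fun x hx y hy a b ha hb hab ↦ by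
    lift a to ℝ≥0 using ha
    lift b to ℝ≥0 using hb
    exact hf.1 hx hy zero_le zero_le (mod_cast hab)
  refine ⟨hs, fun x hx y hy a b ha hb hab ↦ ?_⟩
  lift a to ℝ≥0 using ha
  lift b to ℝ≥0 using hb
  have hax : a • f x ≠ ∞ := ENNReal.mul_ne_top ENNReal.coe_ne_top (hf_top x hx)
  have hby : b • f y ≠ ∞ := ENNReal.mul_ne_top ENNReal.coe_ne_top (hf_top y hy)
  calc (f (a • x + b • y)).toReal ≤ (a • f x + b • f y).toReal :=
        ENNReal.toReal_mono (ENNReal.add_ne_top.2 ⟨hax, hby⟩)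
          (hf.2 hx hy zero_le zero_le (mod_cast hab))
    _ = a • (f x).toReal + b • (f y).toReal := by
        rw [ENNReal.toReal_add hax hby, ENNReal.toReal_smul, ENNReal.toReal_smul]

lemma vadd_smul_subset_of_mem {E : Type*} [AddCommGroup E] [Module ℝ E] {K : Set E}
    (hK : Convex ℝ K) {l : ℝ} (hl0 : 0 ≤ l) (hl1 : l ≤ 1) {t : E} (ht : t ∈ (1 - l) • K) :
    t +ᵥ l • K ⊆ K :=
  (vadd_set_subset_add ht).trans (hK.set_combo_subset (sub_nonneg.2 hl1) hl0 (sub_add_cancel 1 l))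

/-- The volume `μ (conv (K ∪ (t + L)))` as a real-valued function of `t`, with value `0` where the
volume is infinite. For `L = l • K` it is the `l`-homothetic convex hull function of `K`. -/
noncomputable def hullVolume {E : Type*} [AddCommGroup E] [Module ℝ E] [MeasurableSpace E]
    (μ : Measure E) (K L : Set E) (t : E) : ℝ :=
  μ.real (convexHull ℝ (K ∪ (t +ᵥ L)))

lemma isBounded_convexHull_union_vadd {E : Type*} [SeminormedAddCommGroup E] [NormedSpace ℝ E]
    {K L : Set E} (hK : IsBounded K) (hL : IsBounded L) (t : E) :
    IsBounded (convexHull ℝ (K ∪ (t +ᵥ L))) :=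
  isBounded_convexHull.2 (hK.union (hL.vadd t))

lemma hullVolume_eq_of_vadd_subset {E : Type*} [AddCommGroup E] [Module ℝ E] [MeasurableSpace E]
    (μ : Measure E) {K L : Set E} (hK : Convex ℝ K) {t : E} (ht : t +ᵥ L ⊆ K) :
    hullVolume μ K L t = μ.real K := by
  rw [hullVolume, union_eq_self_of_subset_right ht, hK.convexHull_eq]

lemma interior_setOf_hullVolume_le_nonempty {E : Type*} [AddCommGroup E] [Module ℝ E]
    [TopologicalSpace E] [ContinuousConstSMul ℝ E] [MeasurableSpace E] (μ : Measure E) {K : Set E}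
    (hK : Convex ℝ K) (hK₀ : (interior K).Nonempty) {l : ℝ} (hl0 : 0 ≤ l) (hl1 : l < 1) {c : ℝ}
    (hc : μ.real K ≤ c) : (interior {t | hullVolume μ K (l • K) t ≤ c}).Nonempty := by
  have hsub : (1 - l) • K ⊆ {t | hullVolume μ K (l • K) t ≤ c} := fun t ht ↦
    (hullVolume_eq_of_vadd_subset μ hK (vadd_smul_subset_of_mem hK hl0 hl1.le ht)).trans_le hc
  refine Nonempty.mono (interior_mono hsub) ?_
  rw [interior_smul₀ (sub_pos.2 hl1).ne']
  exact hK₀.smul_set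

variable {E : Type*} [NormedAddCommGroup E] [NormedSpace ℝ E] [FiniteDimensional ℝ E]
  [MeasurableSpace E] [BorelSpace E] (μ : Measure E) [μ.IsAddHaarMeasure] {K L : Set E}

theorem convexOn_hullVolume (hK : IsBounded K) (hL : IsBounded L) :
    ConvexOn ℝ univ (hullVolume μ K L) := by
  have hconv := convexOn_measure_shadow μ (convex_convexHull ℝ (K ×ˢ {(0 : ℝ)} ∪ L ×ˢ {1}))
  simp only [← convexHull_union_vadd_eq_shadow] at hconv
  exact convexOn_toReal hconv fun t _ ↦
    (isBounded_convexHull_union_vadd hK hL t).measure_lt_top.ne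

theorem isBounded_setOf_hullVolume_le (hK : IsBounded K) (hK₀ : (interior K).Nonempty)
    (hL : IsBounded L) (hL₀ : L.Nonempty) (c : ℝ) : IsBounded {t | hullVolume μ K L t ≤ c} := by
  obtain ⟨x, hx⟩ := hK₀
  obtain ⟨r, hr, hball⟩ := Metric.mem_nhds_iff.1 (mem_interior_iff_mem_nhds.1 hx)
  obtain ⟨y, hy⟩ := hL₀
  obtain ⟨R, hR⟩ := exists_subset_closedBall_of_measure_le μ x hr (c := ENNReal.ofReal c)
    ENNReal.ofReal_ne_top
  refine (isBounded_closedBall (x := x - y) (r := R)).subset fun t ht ↦ ?_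
  have hsub := subset_convexHull ℝ (K ∪ (t +ᵥ L))
  have hty : t + y ∈ closedBall x R := by
    refine hR _ (convex_convexHull ℝ _) (hball.trans (subset_union_left.trans hsub)) ?_
      (hsub (.inr (vadd_mem_vadd_set hy)))
    rw [← ENNReal.ofReal_toReal (isBounded_convexHull_union_vadd hK hL t).measure_lt_top.ne]
    exact ENNReal.ofReal_le_ofReal ht
  rwa [mem_closedBall, dist_eq_norm, sub_sub_eq_add_sub, ← dist_eq_norm]

theorem isCompact_setOf_hullVolume_le (hK : IsBounded K) (hK₀ : (interior K).Nonempty)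
    (hL : IsBounded L) (hL₀ : L.Nonempty) (c : ℝ) : IsCompact {t | hullVolume μ K L t ≤ c} := by
  have hcont : Continuous (hullVolume μ K L) :=
    (convexOn_hullVolume μ hK hL).locallyLipschitz.continuous
  exact isCompact_of_isClosed_isBounded (isClosed_le hcont continuous_const)
    (isBounded_setOf_hullVolume_le μ hK hK₀ hL hL₀ c)

theorem stmt16_general (hKb : IsBounded K) (hK : Convex ℝ K) (hK₀ : (interior K).Nonempty)
    {l : ℝ} (hl0 : 0 ≤ l) (hl1 : l < 1) {c : ℝ} (hc : μ.real K ≤ c) :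
    IsCompact {t | hullVolume μ K (l • K) t ≤ c} ∧
      Convex ℝ {t | hullVolume μ K (l • K) t ≤ c} ∧
        (interior {t | hullVolume μ K (l • K) t ≤ c}).Nonempty := by
  have hlKb : IsBounded (l • K) := hKb.smul₀ l
  have hlK₀ : (l • K).Nonempty := (hK₀.mono interior_subset).smul_set
  refine ⟨isCompact_setOf_hullVolume_le μ hKb hK₀ hlKb hlK₀ c, ?_,
    interior_setOf_hullVolume_le_nonempty μ hK hK₀ hl0 hl1 hc⟩
  simpa only [mem_univ, true_and] using (convexOn_hullVolume μ hKb hlKb).convex_le c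

end HullVolume

theorem stmt16 {n : ℕ} (hn : 2 ≤ n) (K : Set (EuclideanSpace ℝ (Fin n)))
    (hK : IsConvexBody K) (h0 : (0 : EuclideanSpace ℝ (Fin n)) ∈ interior K)
    (l : ℝ) (hl0 : 0 ≤ l) (hl1 : l < 1) (c : ℝ) (hc : (volume K).toReal ≤ c) :
    IsCompact {t | homChf K l t ≤ c} ∧ Convex ℝ {t | homChf K l t ≤ c} ∧
      (interior {t | homChf K l t ≤ c}).Nonempty :=
  stmt16_general volume hK.1.isBounded hK.2.1 hK.2.2 hl0 hl1 hc
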